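/- arXiv:2202.09165 — 2 statements merged into one kernel-verified Lean document; each statement's English description precedes it below -/
import Mathlib

section
/- Let G be a (d,d)-tight multigraph and let Γ ≤ ℝ^d be a group of translations generated by d linearly independent vectors γ_1,…,γ_d. Assign gains by decomposing G into d edge-disjoint spanning trees T_1,…,T_d (orienting each tree), giving every edge of T_i gain γ_i. Then the |E| × d|V| matrix M whose row for an oriented edge (e,v,w) in T_i has −γ_i in the block of columns for v, +γ_i in the block for w, and zeros elsewhere, has kernel exactly the d-dimensional space of constant vectors {(x,x,…,x) : x ∈ ℝ^d}. In particular rank M = d|V| − d. -/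
/-- The gained "fixed-lattice periodic" rigidity matrix, as a linear map
`(V → ℝ^d) → (E → ℝ)`: the row of an oriented edge `e` (from `src e` to `tgt e`)
lying in the tree of class `c e` is `⟨γ_{c e}, u (tgt e) - u (src e)⟩`,
i.e. it has `-γ_{c e}` in the block of columns of `src e`, `+γ_{c e}` in the block of
`tgt e`, and zeros elsewhere. -/
noncomputable def periodicMatrix {V E : Type} (d : ℕ)
    (src tgt : E → V) (c : E → Fin d) (γ : Fin d → EuclideanSpace ℝ (Fin d)) :
    (V → EuclideanSpace ℝ (Fin d)) →ₗ[ℝ] (E → ℝ) :=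
  LinearMap.pi fun e =>
    (innerSL ℝ (γ (c e))).toLinearMap ∘ₗ
      ((LinearMap.proj (tgt e) :
          (V → EuclideanSpace ℝ (Fin d)) →ₗ[ℝ] EuclideanSpace ℝ (Fin d)) -
        LinearMap.proj (src e))

/-!
If `u` lies in the kernel, then for each label `i` the number `⟨γ i, u v⟩` does not change along an
edge labelled `i`. Those edges connect all the vertices, so `⟨γ i, u v⟩` is independent of `v`. This
holds for every `i`, and the vectors `γ i` span, so `u` itself is constant. The rank follows by
rank–nullity.
-/

/-- Two vertices are `i`-adjacent if some edge labelled `i` joins them, in either orientation. The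
hypothesis that the `i`-th edge class is connected and spanning is stated through this relation. -/
def LabelAdj {V E ι : Type*} (src tgt : E → V) (c : E → ι) (i : ι) (a b : V) : Prop :=
  ∃ e : E, c e = i ∧ ((src e = a ∧ tgt e = b) ∨ (src e = b ∧ tgt e = a))

/-- The coboundary of `u : V → M` along the edges, with the difference across an edge `e` measured
only by the linear map `φ (c e)` attached to the label of `e`. The matrix `periodicMatrix` is the
case in which these maps are the inner products with the vectors `γ i`. -/
def labeledCoboundary {R M N V E ι : Type*} [Ring R] [AddCommGroup M] [Module R M]
    [AddCommGroup N] [Module R N] (src tgt : E → V) (c : E → ι) (φ : ι → M →ₗ[R] N) :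
    (V → M) →ₗ[R] (E → N) :=
  LinearMap.pi fun e => φ (c e) ∘ₗ
    ((LinearMap.proj (tgt e) : (V → M) →ₗ[R] M) - LinearMap.proj (src e))

theorem periodicMatrix_eq_labeledCoboundary {V E : Type} (d : ℕ) (src tgt : E → V)
    (c : E → Fin d) (γ : Fin d → EuclideanSpace ℝ (Fin d)) :
    periodicMatrix d src tgt c γ =
      labeledCoboundary src tgt c fun i => (innerSL ℝ (γ i)).toLinearMap :=
  rfl

theorem eq_of_reflTransGen_labelAdj {V E ι X : Type*} {src tgt : E → V} {c : E → ι} {i : ι}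
    {f : V → X} (hf : ∀ e, c e = i → f (src e) = f (tgt e)) {v w : V}
    (hvw : Relation.ReflTransGen (LabelAdj src tgt c i) v w) : f v = f w := by
  induction hvw with
  | refl => rfl
  | tail _ hadj ih =>
    obtain ⟨e, he, ⟨rfl, rfl⟩ | ⟨rfl, rfl⟩⟩ := hadj
    · exact ih.trans (hf e he)
    · exact ih.trans (hf e he).symm

theorem mem_range_pi_id_iff {R M V : Type*} [Semiring R] [AddCommMonoid M] [Module R M]
    {u : V → M} :
    u ∈ LinearMap.range (LinearMap.pi fun _ : V => (LinearMap.id : M →ₗ[R] M)) ↔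
      ∀ v w, u v = u w := by
  constructor
  · rintro ⟨x, rfl⟩ _ _
    rfl
  · intro hu
    rcases isEmpty_or_nonempty V with _ | ⟨⟨v⟩⟩
    · exact ⟨0, Subsingleton.elim _ _⟩
    · exact ⟨u v, funext (hu v)⟩

theorem iInf_ker_innerSL {𝕜 F ι : Type*} [RCLike 𝕜] [NormedAddCommGroup F]
    [InnerProductSpace 𝕜 F] (γ : ι → F) :
    ⨅ i, LinearMap.ker (innerSL 𝕜 (γ i)).toLinearMap =
      (Submodule.span 𝕜 (Set.range γ))ᗮ := by
  ext x
  simp [Submodule.span_range_eq_iSup, ← Submodule.iInf_orthogonal,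
    Submodule.mem_orthogonal_singleton_iff_inner_right]

theorem iInf_ker_innerSL_eq_bot_of_card_eq_finrank {𝕜 F ι : Type*} [RCLike 𝕜]
    [NormedAddCommGroup F] [InnerProductSpace 𝕜 F] [FiniteDimensional 𝕜 F] [Fintype ι] {γ : ι → F}
    (hγ : LinearIndependent 𝕜 γ) (hcard : Fintype.card ι = Module.finrank 𝕜 F) :
    ⨅ i, LinearMap.ker (innerSL 𝕜 (γ i)).toLinearMap = ⊥ := by
  rw [iInf_ker_innerSL, hγ.span_eq_top_of_card_eq_finrank' hcard,
    Submodule.top_orthogonal_eq_bot]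

section Kernel

variable {R M N V E ι : Type*} [Ring R] [AddCommGroup M] [Module R M] [AddCommGroup N]
  [Module R N] {src tgt : E → V} {c : E → ι} {φ : ι → M →ₗ[R] N}

theorem mem_ker_labeledCoboundary_iff {u : V → M} :
    u ∈ LinearMap.ker (labeledCoboundary src tgt c φ) ↔
      ∀ e, φ (c e) (u (tgt e)) = φ (c e) (u (src e)) := by
  simp [labeledCoboundary, LinearMap.ker_pi, sub_eq_zero]

theorem ker_labeledCoboundary (hφ : ⨅ i, LinearMap.ker (φ i) = ⊥)
    (hconn : ∀ i v w, Relation.ReflTransGen (LabelAdj src tgt c i) v w) :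
    LinearMap.ker (labeledCoboundary src tgt c φ) =
      LinearMap.range (LinearMap.pi fun _ : V => (LinearMap.id : M →ₗ[R] M)) := by
  ext u
  rw [mem_ker_labeledCoboundary_iff, mem_range_pi_id_iff]
  refine ⟨fun hu v w => ?_, fun hu e => congrArg (φ (c e)) (hu _ _)⟩
  have hφu (i : ι) : φ i (u v) = φ i (u w) :=
    eq_of_reflTransGen_labelAdj (f := fun v => φ i (u v))
      (by rintro e rfl; exact (hu e).symm) (hconn i v w)
  have hmem : u v - u w ∈ ⨅ i, LinearMap.ker (φ i) := by
    simpa [sub_eq_zero] using hφu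
  rwa [hφ, Submodule.mem_bot, sub_eq_zero] at hmem

end Kernel

theorem finrank_range_pi_id {R M V : Type*} [Semiring R] [AddCommMonoid M] [Module R M]
    [Nonempty V] :
    Module.finrank R
        (LinearMap.range (LinearMap.pi fun _ : V => (LinearMap.id : M →ₗ[R] M))) =
      Module.finrank R M :=
  LinearMap.finrank_range_of_inj (Function.const_injective (α := V))

theorem periodicMatrix_kernel_general {K M N V E ι : Type*} [DivisionRing K] [AddCommGroup M]
    [Module K M] [AddCommGroup N] [Module K N] [Nonempty V] (src tgt : E → V) (c : E → ι)
    (φ : ι → M →ₗ[K] N) (hφ : ⨅ i, LinearMap.ker (φ i) = ⊥)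
    (hconn : ∀ i v w, Relation.ReflTransGen (LabelAdj src tgt c i) v w) :
    LinearMap.ker (labeledCoboundary src tgt c φ) =
      LinearMap.range (LinearMap.pi fun _ : V => (LinearMap.id : M →ₗ[K] M)) ∧
    ∀ [Fintype V] [FiniteDimensional K M],
      Module.finrank K (LinearMap.range (labeledCoboundary src tgt c φ)) =
        Module.finrank K M * Fintype.card V - Module.finrank K M := by
  have hker := ker_labeledCoboundary hφ hconn
  refine ⟨hker, ?_⟩
  intro _ _
  have hrank := (labeledCoboundary src tgt c φ).finrank_range_add_finrank_ker
  rw [hker, finrank_range_pi_id, Module.finrank_pi_fintype, Finset.sum_const,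
    Finset.card_univ, smul_eq_mul, mul_comm] at hrank
  exact Nat.eq_sub_of_add_eq hrank

/-- Borcea–Streinu/Whiteley style statement: if a `(d,d)`-tight multigraph is decomposed
into `d` edge-disjoint (oriented) spanning trees `T_1, …, T_d` (edge `e` belongs to tree
`c e`), and each tree edge is given gain `γ_{c e}` where `γ_1, …, γ_d` are linearly
independent translations, then the kernel of the resulting `|E| × d|V|` matrix is exactly
the `d`-dimensional space of constant maps `V → ℝ^d`; in particular its rank is
`d|V| - d`. -/
theorem periodicMatrix_kernel {V E : Type} [Fintype V] [Fintype E] [Nonempty V] (d : ℕ)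
    (src tgt : E → V) (c : E → Fin d)
    (γ : Fin d → EuclideanSpace ℝ (Fin d))
    (hγ : LinearIndependent ℝ γ)
    (hTight : (∀ X : Set V, 1 ≤ Nat.card X →
        Nat.card {e : E // src e ∈ X ∧ tgt e ∈ X} ≤ d * Nat.card X - d) ∧
      Nat.card E = d * Nat.card V - d)
    (hTree : ∀ i : Fin d,
      (∀ v w : V, Relation.ReflTransGen
        (fun a b => ∃ e : E, c e = i ∧
          ((src e = a ∧ tgt e = b) ∨ (src e = b ∧ tgt e = a))) v w) ∧
      Nat.card {e : E // c e = i} = Fintype.card V - 1) :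
    LinearMap.ker (periodicMatrix d src tgt c γ) =
      LinearMap.range (LinearMap.pi fun _ : V =>
        (LinearMap.id : EuclideanSpace ℝ (Fin d) →ₗ[ℝ] EuclideanSpace ℝ (Fin d))) ∧
    Module.finrank ℝ (LinearMap.range (periodicMatrix d src tgt c γ)) =
      d * Fintype.card V - d := by
  have hφ := iInf_ker_innerSL_eq_bot_of_card_eq_finrank hγ (by simp)
  rw [periodicMatrix_eq_labeledCoboundary]
  exact (periodicMatrix_kernel_general src tgt c _ hφ fun i => (hTree i).1).imp_right
    fun hrank => hrank.trans (by rw [finrank_euclideanSpace_fin])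
end

section
/- Let Γ ≤ O(d) be a finite nontrivial group and let G be a multigraph on at least d vertices with ℙ(G,Γ) the proportion of Γ-gain maps φ on G for which (G,φ) is Γ-symmetrically rigid in ℝ^d. If G' is formed from G by adding a new vertex v0 joined by single edges to d distinct vertices v_1,…,v_d of G, then ℙ(G',Γ) = ℙ(G,Γ). -/
open Matrix

/-- The orthogonal matrix underlying an element of a point group `Γ ≤ O(d)`. -/
noncomputable def gmat {d : ℕ} {Γ : Subgroup (Matrix.orthogonalGroup (Fin d) ℝ)}
    (γ : Γ) : Matrix (Fin d) (Fin d) ℝ :=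
  ((γ : Matrix.orthogonalGroup (Fin d) ℝ) : Matrix (Fin d) (Fin d) ℝ)

/-- `gain` is a valid `Γ`-gain map: loops carry nontrivial gains and parallel edges
(in either relative orientation) carry distinct gains. -/
def IsGainMap {d : ℕ} {Γ : Subgroup (Matrix.orthogonalGroup (Fin d) ℝ)} {V E : Type}
    (src tgt : E → V) (gain : E → Γ) : Prop :=
  (∀ e, src e = tgt e → gain e ≠ 1) ∧
  (∀ e e', e ≠ e' → src e = src e' → tgt e = tgt e' → gain e ≠ gain e') ∧
  (∀ e e', e ≠ e' → src e = tgt e' → tgt e = src e' → gain e ≠ (gain e')⁻¹)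

/-- `u` is a `Γ`-symmetric infinitesimal flex of the orbit framework. -/
def IsSymFlex {d : ℕ} {Γ : Subgroup (Matrix.orthogonalGroup (Fin d) ℝ)} {V E : Type}
    (src tgt : E → V) (gain : E → Γ) (p u : V → (Fin d → ℝ)) : Prop :=
  ∀ e : E,
    (p (src e) - (gmat (gain e)).mulVec (p (tgt e))) ⬝ᵥ u (src e) +
      (p (tgt e) - (gmat (gain e)⁻¹).mulVec (p (src e))) ⬝ᵥ u (tgt e) = 0

/-- Triviality of a `Γ`-symmetric flex. -/
def IsTrivialFlex {d : ℕ} (Γ : Subgroup (Matrix.orthogonalGroup (Fin d) ℝ)) {V : Type}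
    (p u : V → (Fin d → ℝ)) : Prop :=
  ∃ (T : Matrix (Fin d) (Fin d) ℝ) (x : Fin d → ℝ),
    Tᵀ = -T ∧ (∀ v, u v = T.mulVec (p v) + x) ∧
    (∀ v, ∀ γ : Γ, (gmat γ).mulVec (u v) = T.mulVec ((gmat γ).mulVec (p v)) + x)

/-- `Γ`-symmetric rigidity of a gain graph: some orbit placement has only trivial
symmetric flexes. -/
def SymRigid {d : ℕ} (Γ : Subgroup (Matrix.orthogonalGroup (Fin d) ℝ)) {V E : Type}
    (src tgt : E → V) (gain : E → Γ) : Prop :=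
  ∃ p : V → (Fin d → ℝ),
    ∀ u : V → (Fin d → ℝ), IsSymFlex src tgt gain p u → IsTrivialFlex Γ p u

/-!
For generic `p` the `d` new edges pin `u none` down uniquely in terms of `u` on the old vertices,
because the coefficient matrix `newVertexBlock`, whose rows are `p none - γᵢ p(vᵢ)`, is invertible;
hence at such a placement the extension is rigid iff `G` is, whatever the `d` new gains are.
Generic placements suffice: rigidity at `p` says that the ranks of the rigidity map and of the map
of trivial flexes add up to at least `d |V|`, so by lower semicontinuity of rank it is an open
condition on `p`, while invertibility of `newVertexBlock` is a dense one. Averaging over `Γ` makes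
the trivial flexes the image of a linear map depending continuously on `p`, namely the restriction
to the joints of the `Γ`-invariant infinitesimal isometries. Each gain map of `G`
therefore contributes equally many extensions to both counts.
-/

open Module

section FixedPoint

variable {𝕜 G M : Type*} [Field 𝕜] [LinearOrder 𝕜] [IsStrictOrderedRing 𝕜] [Group G] [Finite G]
  [AddCommGroup M] [Module 𝕜 M]

lemma exists_mem_invariants_of_convex (ρ : Representation 𝕜 G M) {C : Set M} (hC : Convex 𝕜 C)
    (hne : C.Nonempty) (hρ : ∀ g, Set.MapsTo (ρ g) C C) : ∃ m ∈ C, m ∈ ρ.invariants := by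
  have := Fintype.ofFinite G
  obtain ⟨m, hm⟩ := hne
  have hcard : (Fintype.card G : 𝕜) ≠ 0 := Nat.cast_ne_zero.2 Fintype.card_ne_zero
  refine ⟨∑ g, (Fintype.card G : 𝕜)⁻¹ • ρ g m, hC.sum_mem ?_ ?_ fun g _ => hρ g hm, fun h => ?_⟩
  · exact fun _ _ => by positivity
  · simp [hcard]
  · simp only [map_sum, map_smul, ← Module.End.mul_apply, ← map_mul]
    exact Fintype.sum_equiv (Equiv.mulLeft h) _ _ fun _ => rfl

end FixedPoint

section Semicontinuity

variable {𝕜 X M N : Type*} [NontriviallyNormedField 𝕜] [CompleteSpace 𝕜] [TopologicalSpace X]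
  [AddCommGroup M] [Module 𝕜 M] [NormedAddCommGroup N] [NormedSpace 𝕜 N] [FiniteDimensional 𝕜 N]

lemma lowerSemicontinuous_finrank_range (A : X → M →ₗ[𝕜] N) (hA : ∀ m, Continuous (A · m)) :
    LowerSemicontinuous fun x => finrank 𝕜 (LinearMap.range (A x)) := by
  refine lowerSemicontinuous_iff_isOpen_preimage.2 fun n => ?_
  have hrank : (fun x => finrank 𝕜 (LinearMap.range (A x))) ⁻¹' Set.Ioi n =
      ⋃ s : {s : Finset M // s.card = n + 1}, {x | LinearIndependent 𝕜 fun m : s.1 => A x m} := by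
    ext x
    have h := LinearMap.le_rank_iff_exists_linearIndependent_finset (f := A x) (n := n + 1)
    rw [LinearMap.rank, ← finrank_eq_rank, Nat.cast_le] at h
    simpa [Nat.succ_le_iff] using h
  rw [hrank]
  exact isOpen_iUnion fun s =>
    isOpen_setOfPred_linearIndependent.preimage
      (continuous_pi fun m : s.1 => hA m : Continuous fun x (m : s.1) => A x m)

end Semicontinuity

lemma dense_setOfPred_det_ne_zero {𝕜 n : Type*} [NontriviallyNormedField 𝕜] [Fintype n]
    [DecidableEq n] : Dense {M : Matrix n n 𝕜 | M.det ≠ 0} := by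
  intro M
  have hdet : {t : 𝕜 | (scalar n t + M).det = 0}.Finite := by
    convert Polynomial.finite_setOfPred_isRoot (Matrix.charpoly_monic (-M)).ne_zero using 3
    rw [Polynomial.IsRoot, Matrix.eval_charpoly, sub_neg_eq_add]
  have hdense : Dense {t : 𝕜 | (scalar n t + M).det = 0}ᶜ := by
    simpa [Set.compl_eq_univ_sdiff] using dense_univ.sdiff_finite hdet
  have hcont : Continuous fun t : 𝕜 => scalar n t + M := by
    simp only [scalar_apply]
    fun_prop
  simpa using map_mem_closure hcont (hdense 0) fun t ht => ht

lemma dotProduct_mulVec_self_eq_zero {n R : Type*} [Fintype n] [CommRing R] [NoZeroDivisors R]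
    [CharZero R] {T : Matrix n n R} (hT : Tᵀ = -T) (y : n → R) : y ⬝ᵥ T *ᵥ y = 0 := by
  refine self_eq_neg.1 ?_
  conv_lhs => rw [dotProduct_mulVec, ← mulVec_transpose, hT, neg_mulVec, neg_dotProduct,
    dotProduct_comm]

variable {d : ℕ} {Γ : Subgroup (Matrix.orthogonalGroup (Fin d) ℝ)}

section Gains

lemma gmat_one : gmat (1 : Γ) = 1 := rfl

lemma gmat_mul (γ δ : Γ) : gmat (γ * δ) = gmat γ * gmat δ := rfl

lemma gmat_inv (γ : Γ) : gmat γ⁻¹ = (gmat γ)ᵀ := rfl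

lemma gmat_mulVec_gmat_inv_mulVec (γ : Γ) (y : Fin d → ℝ) : gmat γ *ᵥ gmat γ⁻¹ *ᵥ y = y := by
  rw [mulVec_mulVec, ← gmat_mul, mul_inv_cancel, gmat_one, one_mulVec]

lemma gmat_inv_mulVec_gmat_mulVec (γ : Γ) (y : Fin d → ℝ) : gmat γ⁻¹ *ᵥ gmat γ *ᵥ y = y := by
  simpa using gmat_mulVec_gmat_inv_mulVec γ⁻¹ y

lemma gmat_inv_mulVec_dotProduct (γ : Γ) (y z : Fin d → ℝ) :
    (gmat γ⁻¹ *ᵥ y) ⬝ᵥ z = y ⬝ᵥ gmat γ *ᵥ z := by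
  rw [gmat_inv, mulVec_transpose, dotProduct_mulVec]

end Gains

section KillingFields

/-- Affine vector fields on `ℝ^d`: the pair `(T, x)` stands for `y ↦ T y + x`. -/
abbrev AffineField (d : ℕ) : Type := Matrix (Fin d) (Fin d) ℝ × (Fin d → ℝ)

/-- The value at `y` of an affine vector field, as a linear function of the field. -/
def evalField (y : Fin d → ℝ) : AffineField d →ₗ[ℝ] (Fin d → ℝ) :=
  (mulVecBilin ℝ ℝ).flip y ∘ₗ LinearMap.fst ℝ _ _ + LinearMap.snd ℝ _ _

lemma evalField_apply (y : Fin d → ℝ) (k : AffineField d) : evalField y k = k.1 *ᵥ y + k.2 := rfl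

/-- The Killing fields of `ℝ^d`, that is, the infinitesimal isometries: the affine fields with
skew-symmetric linear part. -/
def killingFields (d : ℕ) : Submodule ℝ (AffineField d) where
  carrier := {k | k.1ᵀ = -k.1}
  zero_mem' := by simp
  add_mem' hk hl := by simp_all [add_comm]
  smul_mem' _ _ hk := by simp_all

/-- The pushforward action of a point group on affine vector fields. -/
noncomputable def fieldRep (Γ : Subgroup (Matrix.orthogonalGroup (Fin d) ℝ)) :
    Representation ℝ Γ (AffineField d) where
  toFun γ := (LinearMap.mulLeft ℝ (gmat γ) ∘ₗ LinearMap.mulRight ℝ (gmat γ⁻¹)).prodMap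
    (mulVecLin (gmat γ))
  map_one' := by ext <;> simp [gmat_one]
  map_mul' γ δ := by
    refine LinearMap.ext fun k => Prod.ext ?_ ?_
    · simp [gmat_mul, Matrix.mul_assoc]
    · simp [gmat_mul]

lemma fieldRep_apply (γ : Γ) (k : AffineField d) :
    fieldRep Γ γ k = (gmat γ * (k.1 * gmat γ⁻¹), gmat γ *ᵥ k.2) := rfl

lemma gmat_mulVec_evalField (γ : Γ) (y : Fin d → ℝ) (k : AffineField d) :
    gmat γ *ᵥ evalField y k = evalField (gmat γ *ᵥ y) (fieldRep Γ γ k) := by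
  simp only [evalField_apply, fieldRep_apply, mulVec_add, ← mulVec_mulVec,
    gmat_inv_mulVec_gmat_mulVec]

lemma fieldRep_mem_killingFields (γ : Γ) {k : AffineField d} (hk : k ∈ killingFields d) :
    fieldRep Γ γ k ∈ killingFields d := by
  change (gmat γ * (k.1 * (gmat γ)ᵀ))ᵀ = -(gmat γ * (k.1 * (gmat γ)ᵀ))
  have hskew : k.1ᵀ = -k.1 := hk
  simp [hskew, Matrix.mul_assoc]

/-- The `Γ`-invariant Killing fields. -/
noncomputable def invariantKillingFields (Γ : Subgroup (Matrix.orthogonalGroup (Fin d) ℝ)) :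
    Submodule ℝ (AffineField d) :=
  killingFields d ⊓ (fieldRep Γ).invariants

lemma gmat_mulVec_evalField_of_mem (γ : Γ) (y : Fin d → ℝ) {k : AffineField d}
    (hk : k ∈ invariantKillingFields Γ) :
    gmat γ *ᵥ evalField y k = evalField (gmat γ *ᵥ y) k := by
  rw [gmat_mulVec_evalField, hk.2 γ]

lemma edge_constraint_evalField (γ : Γ) (a b : Fin d → ℝ) {k : AffineField d}
    (hk : k ∈ invariantKillingFields Γ) :
    (a - gmat γ *ᵥ b) ⬝ᵥ evalField a k + (b - gmat γ⁻¹ *ᵥ a) ⬝ᵥ evalField b k = 0 := by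
  have hend : b - gmat γ⁻¹ *ᵥ a = -(gmat γ⁻¹ *ᵥ (a - gmat γ *ᵥ b)) := by
    rw [mulVec_sub, gmat_inv_mulVec_gmat_mulVec, neg_sub]
  have hdiff : evalField a k - evalField (gmat γ *ᵥ b) k = k.1 *ᵥ (a - gmat γ *ᵥ b) := by
    simp only [evalField_apply, add_sub_add_right_eq_sub, mulVec_sub]
  rw [hend, neg_dotProduct, gmat_inv_mulVec_dotProduct, gmat_mulVec_evalField_of_mem γ b hk,
    ← sub_eq_add_neg, ← dotProduct_sub, hdiff]
  exact dotProduct_mulVec_self_eq_zero hk.1 _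

end KillingFields

section Rigidity

variable {V E : Type}

/-- The restriction of `Γ`-invariant Killing fields to the joints of a placement `p`; its range is
the space of trivial `Γ`-symmetric flexes of `p`. -/
noncomputable def trivialFlexMap (Γ : Subgroup (Matrix.orthogonalGroup (Fin d) ℝ))
    (p : V → (Fin d → ℝ)) : invariantKillingFields Γ →ₗ[ℝ] (V → (Fin d → ℝ)) :=
  (LinearMap.pi fun v => evalField (p v)).domRestrict (invariantKillingFields Γ)

/-- The linear map of the orbit rigidity matrix of a gain graph at the placement `p`. -/
noncomputable def orbitRigidityMap (src tgt : E → V) (gain : E → Γ) (p : V → (Fin d → ℝ)) :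
    (V → (Fin d → ℝ)) →ₗ[ℝ] (E → ℝ) :=
  LinearMap.pi fun e =>
    dotProductBilin ℝ ℝ (p (src e) - gmat (gain e) *ᵥ p (tgt e)) ∘ₗ LinearMap.proj (src e) +
    dotProductBilin ℝ ℝ (p (tgt e) - gmat (gain e)⁻¹ *ᵥ p (src e)) ∘ₗ LinearMap.proj (tgt e)

/-- Rigidity of a gain graph at a given orbit placement. -/
def RigidAt (src tgt : E → V) (gain : E → Γ) (p : V → (Fin d → ℝ)) : Prop :=
  ∀ u : V → (Fin d → ℝ), IsSymFlex src tgt gain p u → IsTrivialFlex Γ p u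

lemma isSymFlex_iff_mem_ker (src tgt : E → V) (gain : E → Γ) (p u : V → (Fin d → ℝ)) :
    IsSymFlex src tgt gain p u ↔ u ∈ LinearMap.ker (orbitRigidityMap src tgt gain p) :=
  funext_iff.symm

lemma exists_mem_invariantKillingFields_evalField_eq [Finite Γ] {p u : V → (Fin d → ℝ)}
    {k : AffineField d} (hk : k ∈ killingFields d)
    (hku : ∀ v, ∀ γ : Γ, evalField (gmat γ *ᵥ p v) k = gmat γ *ᵥ u v) :
    ∃ l ∈ invariantKillingFields Γ, ∀ v, evalField (p v) l = u v := by
  -- The Killing fields extending `u` on all orbits form a `Γ`-stable affine space.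
  let C : Set (AffineField d) := killingFields d ∩
    LinearMap.pi (fun i : Γ × V => evalField (gmat i.1 *ᵥ p i.2)) ⁻¹' {fun i => gmat i.1 *ᵥ u i.2}
  have hC : Convex ℝ C := (killingFields d).convex.inter ((convex_singleton _).linear_preimage _)
  have hne : C.Nonempty := ⟨k, hk, funext fun i => hku i.2 i.1⟩
  have hstable (δ : Γ) : Set.MapsTo (fieldRep Γ δ) C C := by
    rintro l ⟨hl, hlu⟩
    refine ⟨fieldRep_mem_killingFields δ hl, funext fun ⟨γ, v⟩ => ?_⟩
    have hδ : evalField (gmat (δ⁻¹ * γ) *ᵥ p v) l = gmat (δ⁻¹ * γ) *ᵥ u v :=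
      congrFun hlu (δ⁻¹ * γ, v)
    calc
      evalField (gmat γ *ᵥ p v) (fieldRep Γ δ l)
        = gmat δ *ᵥ evalField (gmat (δ⁻¹ * γ) *ᵥ p v) l := by
          rw [gmat_mulVec_evalField, gmat_mul, ← mulVec_mulVec, gmat_mulVec_gmat_inv_mulVec]
      _ = gmat γ *ᵥ u v := by
          rw [hδ, gmat_mul, ← mulVec_mulVec, gmat_mulVec_gmat_inv_mulVec]
  obtain ⟨l, ⟨hl, hlu⟩, hinv⟩ := exists_mem_invariants_of_convex (fieldRep Γ) hC hne hstable
  refine ⟨l, ⟨hl, hinv⟩, fun v => ?_⟩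
  have hone : evalField (gmat (1 : Γ) *ᵥ p v) l = gmat (1 : Γ) *ᵥ u v := congrFun hlu (1, v)
  rwa [gmat_one, one_mulVec, one_mulVec] at hone

lemma isTrivialFlex_iff_mem_range [Finite Γ] (p u : V → (Fin d → ℝ)) :
    IsTrivialFlex Γ p u ↔ u ∈ LinearMap.range (trivialFlexMap Γ p) := by
  constructor
  · rintro ⟨T, x, hT, -, hTx⟩
    obtain ⟨l, hl, hlu⟩ := exists_mem_invariantKillingFields_evalField_eq (k := (T, x)) hT
      fun v γ => (hTx v γ).symm
    exact ⟨⟨l, hl⟩, funext hlu⟩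
  · rintro ⟨⟨k, hk⟩, rfl⟩
    exact ⟨k.1, k.2, hk.1, fun _ => rfl, fun v γ => gmat_mulVec_evalField_of_mem γ (p v) hk⟩

lemma range_trivialFlexMap_le_ker (src tgt : E → V) (gain : E → Γ) (p : V → (Fin d → ℝ)) :
    LinearMap.range (trivialFlexMap Γ p) ≤ LinearMap.ker (orbitRigidityMap src tgt gain p) := by
  rintro _ ⟨⟨k, hk⟩, rfl⟩
  exact funext fun e => edge_constraint_evalField (gain e) _ _ hk

lemma rigidAt_iff_finrank_le [Finite Γ] [Finite V] (src tgt : E → V) (gain : E → Γ)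
    (p : V → (Fin d → ℝ)) :
    RigidAt src tgt gain p ↔ finrank ℝ (V → (Fin d → ℝ)) ≤
      finrank ℝ (LinearMap.range (orbitRigidityMap src tgt gain p)) +
        finrank ℝ (LinearMap.range (trivialFlexMap Γ p)) := by
  have hle := range_trivialFlexMap_le_ker src tgt gain p
  calc
    RigidAt src tgt gain p ↔
        LinearMap.ker (orbitRigidityMap src tgt gain p) ≤ LinearMap.range (trivialFlexMap Γ p) := by
      simp only [RigidAt, isSymFlex_iff_mem_ker, isTrivialFlex_iff_mem_range, SetLike.le_def]
    _ ↔ finrank ℝ (LinearMap.ker (orbitRigidityMap src tgt gain p)) ≤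
        finrank ℝ (LinearMap.range (trivialFlexMap Γ p)) :=
      ⟨Submodule.finrank_mono, fun h => (Submodule.eq_of_le_of_finrank_le hle h).ge⟩
    _ ↔ _ := by
      rw [← LinearMap.finrank_range_add_finrank_ker (orbitRigidityMap src tgt gain p),
        add_le_add_iff_left]

lemma isOpen_setOfPred_rigidAt [Finite Γ] [Finite V] [Finite E] (src tgt : E → V)
    (gain : E → Γ) : IsOpen {p | RigidAt src tgt gain p} := by
  have := Fintype.ofFinite V
  have := Fintype.ofFinite E
  have hrig := lowerSemicontinuous_finrank_range (orbitRigidityMap src tgt gain) fun u => by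
    refine continuous_pi fun e => ?_
    change Continuous fun p : V → (Fin d → ℝ) =>
      (p (src e) - gmat (gain e) *ᵥ p (tgt e)) ⬝ᵥ u (src e) +
        (p (tgt e) - gmat (gain e)⁻¹ *ᵥ p (src e)) ⬝ᵥ u (tgt e)
    fun_prop
  have htriv := lowerSemicontinuous_finrank_range (trivialFlexMap (V := V) Γ) fun k => by
    refine continuous_pi fun v => ?_
    change Continuous fun p : V → (Fin d → ℝ) => k.1.1 *ᵥ p v + k.1.2
    fun_prop
  simp only [rigidAt_iff_finrank_le]
  cases finrank ℝ (V → (Fin d → ℝ)) with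
  | zero => simp
  | succ n => exact (hrig.add htriv).isOpen_preimage n

end Rigidity

section ZeroExtension

variable {V E ι : Type}

/-- Sources of the edges of the zero-extension: the new vertex is `none`, and the new edges
`Sum.inr i` leave it. -/
abbrev zeroExtSrc (ι : Type) (src : E → V) : E ⊕ ι → Option V :=
  Sum.elim (fun e => some (src e)) (fun _ => none)

/-- Targets of the edges of the zero-extension: the new edge `Sum.inr i` ends at `v i`. -/
abbrev zeroExtTgt (tgt : E → V) (v : ι → V) : E ⊕ ι → Option V :=
  Sum.elim (fun e => some (tgt e)) (fun i => some (v i))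

/-- The block of the orbit rigidity matrix of a zero-extension in the rows of the new edges and
the columns of the new vertex, as a linear function of the placement. -/
noncomputable def newVertexBlock (v : ι → V) (h : ι → Γ) :
    (Option V → (Fin d → ℝ)) →ₗ[ℝ] Matrix ι (Fin d) ℝ where
  toFun p := of fun i => p none - gmat (h i) *ᵥ p (some (v i))
  map_add' p q := by
    ext i j
    simp [mulVec_add]; ring
  map_smul' c p := by
    ext i j
    simp [mulVec_smul]; ring

lemma newVertexBlock_surjective {v : ι → V} (hv : Function.Injective v) (h : ι → Γ) :
    Function.Surjective (newVertexBlock v h) := by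
  intro M
  let q : V → (Fin d → ℝ) := Function.extend v (fun i => -(gmat (h i)⁻¹ *ᵥ M i)) 0
  refine ⟨fun o => o.elim 0 q, funext fun i => ?_⟩
  have hq : q (v i) = -(gmat (h i)⁻¹ *ᵥ M i) := hv.extend_apply _ _ i
  change 0 - gmat (h i) *ᵥ q (v i) = M i
  rw [hq, mulVec_neg, gmat_mulVec_gmat_inv_mulVec, zero_sub, neg_neg]

lemma dense_setOfPred_det_newVertexBlock_ne_zero {v : Fin d → V} (hv : Function.Injective v)
    (h : Fin d → Γ) : Dense {p | (newVertexBlock v h p).det ≠ 0} :=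
  dense_setOfPred_det_ne_zero.preimage
    ((newVertexBlock v h).isOpenMap_of_finiteDimensional (newVertexBlock_surjective hv h))

lemma isSymFlex_zeroExt_iff (src tgt : E → V) (v : ι → V) (g : E ⊕ ι → Γ)
    (p u : Option V → (Fin d → ℝ)) :
    IsSymFlex (zeroExtSrc ι src) (zeroExtTgt tgt v) g p u ↔
      IsSymFlex src tgt (g ∘ Sum.inl) (p ∘ some) (u ∘ some) ∧
      newVertexBlock v (g ∘ Sum.inr) p *ᵥ u none = fun i =>
        -((p (some (v i)) - gmat (g (Sum.inr i))⁻¹ *ᵥ p none) ⬝ᵥ u (some (v i))) := by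
  simp only [IsSymFlex, Sum.forall, funext_iff, ← add_eq_zero_iff_eq_neg]
  rfl

lemma RigidAt.of_zeroExt {src tgt : E → V} {v : Fin d → V} {g : E ⊕ Fin d → Γ}
    {p : Option V → (Fin d → ℝ)} (hp : (newVertexBlock v (g ∘ Sum.inr) p).det ≠ 0)
    (h : RigidAt (zeroExtSrc (Fin d) src) (zeroExtTgt tgt v) g p) :
    RigidAt src tgt (g ∘ Sum.inl) (p ∘ some) := by
  intro u hu
  obtain ⟨w, hw⟩ := mulVec_surjective_iff_isUnit.2 ((isUnit_iff_isUnit_det _).2 hp.isUnit)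
    fun i => -((p (some (v i)) - gmat (g (Sum.inr i))⁻¹ *ᵥ p none) ⬝ᵥ u (v i))
  obtain ⟨T, x, hT, hTu, hTγ⟩ := h (fun o => o.elim w u)
    ((isSymFlex_zeroExt_iff src tgt v g p _).2 ⟨hu, hw⟩)
  exact ⟨T, x, hT, fun a => hTu (some a), fun a => hTγ (some a)⟩

lemma RigidAt.zeroExt [Finite Γ] {src tgt : E → V} {v : Fin d → V} {g : E ⊕ Fin d → Γ}
    {p : Option V → (Fin d → ℝ)} (hp : (newVertexBlock v (g ∘ Sum.inr) p).det ≠ 0)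
    (h : RigidAt src tgt (g ∘ Sum.inl) (p ∘ some)) :
    RigidAt (zeroExtSrc (Fin d) src) (zeroExtTgt tgt v) g p := by
  intro u hu
  obtain ⟨hold, hnew⟩ := (isSymFlex_zeroExt_iff src tgt v g p u).1 hu
  obtain ⟨k, hk⟩ := (isTrivialFlex_iff_mem_range _ _).1 (h _ hold)
  have hsome (a : V) : evalField (p (some a)) k.1 = u (some a) := congrFun hk a
  have hnone : evalField (p none) k.1 = u none := by
    refine mulVec_injective_of_isUnit ((isUnit_iff_isUnit_det _).2 hp.isUnit) ?_
    simp only [hnew, ← hsome]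
    exact funext fun i => eq_neg_of_add_eq_zero_left (edge_constraint_evalField _ _ _ k.2)
  exact (isTrivialFlex_iff_mem_range p u).2 ⟨k, funext (Option.rec hnone hsome)⟩

lemma symRigid_zeroExt_iff [Finite Γ] [Finite V] [Finite E] (src tgt : E → V) {v : Fin d → V}
    (hv : Function.Injective v) (g : E ⊕ Fin d → Γ) :
    SymRigid Γ (zeroExtSrc (Fin d) src) (zeroExtTgt tgt v) g ↔
      SymRigid Γ src tgt (g ∘ Sum.inl) := by
  have hdense := dense_setOfPred_det_newVertexBlock_ne_zero hv (g ∘ Sum.inr)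
  constructor
  · intro h
    obtain ⟨p, hp, hrigid⟩ := hdense.exists_mem_open (isOpen_setOfPred_rigidAt _ _ g) h
    exact ⟨p ∘ some, RigidAt.of_zeroExt hp hrigid⟩
  · rintro ⟨q, hq⟩
    have hopen : IsOpen {p : Option V → (Fin d → ℝ) |
        RigidAt src tgt (g ∘ Sum.inl) (p ∘ some)} :=
      (isOpen_setOfPred_rigidAt src tgt (g ∘ Sum.inl)).preimage (by fun_prop)
    obtain ⟨p, hp, hrigid⟩ := hdense.exists_mem_open hopen ⟨fun o => o.elim 0 q, hq⟩
    exact ⟨p, RigidAt.zeroExt hp hrigid⟩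

lemma isGainMap_zeroExt_iff (src tgt : E → V) {v : ι → V} (hv : Function.Injective v)
    (g : E ⊕ ι → Γ) :
    IsGainMap (zeroExtSrc ι src) (zeroExtTgt tgt v) g ↔ IsGainMap src tgt (g ∘ Sum.inl) := by
  simp +contextual [IsGainMap, hv.eq_iff]

end ZeroExtension

lemma card_subtype_comp_inl {α β γ : Type*} (P : (α → γ) → Prop) :
    Nat.card {f : α ⊕ β → γ // P (f ∘ Sum.inl)} =
      Nat.card {f : α → γ // P f} * Nat.card (β → γ) := by
  rw [← Nat.card_prod]
  exact Nat.card_congr <| ((Equiv.sumArrowEquivProdArrow α β γ).subtypeEquiv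
    (q := fun f => P f.1) fun _ => Iff.rfl).trans Equiv.prodSubtypeFstEquivSubtypeProd

/-- Let `Γ ≤ O(d)` be a finite nontrivial point group and `G` a multigraph on at least
`d` vertices.  If `G'` is formed from `G` by adding a new vertex (`none`) joined by
single edges to `d` distinct vertices `v 0, …, v (d-1)` of `G`, then the probability
that a uniformly random `Γ`-gain map on `G'` is a rigid gain assignment equals the
corresponding probability for `G`. -/
theorem prob_rigid_gain_zero_extension {d : ℕ}
    (Γ : Subgroup (Matrix.orthogonalGroup (Fin d) ℝ)) [Finite Γ] (hΓ : Γ ≠ ⊥)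
    {V E : Type} [Fintype V] [Fintype E] (hV : d ≤ Fintype.card V)
    (src tgt : E → V) (v : Fin d → V) (hv : Function.Injective v) :
    ((Nat.card {g' : (E ⊕ Fin d) → Γ //
        IsGainMap (Sum.elim (fun e => some (src e)) (fun _ => (none : Option V)))
          (Sum.elim (fun e => some (tgt e)) (fun i => some (v i))) g' ∧
        SymRigid Γ (Sum.elim (fun e => some (src e)) (fun _ => (none : Option V)))
          (Sum.elim (fun e => some (tgt e)) (fun i => some (v i))) g'} : ℚ) /
      (Nat.card {g' : (E ⊕ Fin d) → Γ //
        IsGainMap (Sum.elim (fun e => some (src e)) (fun _ => (none : Option V)))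
          (Sum.elim (fun e => some (tgt e)) (fun i => some (v i))) g'} : ℚ)) =
    ((Nat.card {g : E → Γ //
        IsGainMap src tgt g ∧ SymRigid Γ src tgt g} : ℚ) /
      (Nat.card {g : E → Γ // IsGainMap src tgt g} : ℚ)) := by
  have hgain := isGainMap_zeroExt_iff (Γ := Γ) src tgt hv
  have hrigid := symRigid_zeroExt_iff (Γ := Γ) src tgt hv
  have hcard : (Nat.card (Fin d → Γ) : ℚ) ≠ 0 := Nat.cast_ne_zero.2 Nat.card_pos.ne'
  simp only [hgain, hrigid]
  rw [card_subtype_comp_inl (IsGainMap src tgt),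
    card_subtype_comp_inl fun g => IsGainMap src tgt g ∧ SymRigid Γ src tgt g,
    Nat.cast_mul, Nat.cast_mul, mul_div_mul_right _ _ hcard]
end
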